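/- Fix i ∈ A and o_i ∈ ℝ, and define the offer profile O by: for every i' ∈ A, O_{i'} = max over all paths P from i to i' in S of f^P_{i,i'}(o_i) (with O_i = o_i), and for every j ∈ B, O_j = max over i' ∈ Nbr(j) of v_j(i', O_{i'}). If (i',j') and (i',j'') are edges of E not in EQ(O) and v_{i'}(j', O_{j'}) > v_{i'}(j'', O_{j''}), then every path from i to j' in EQ(O) contains at least one node of Nbr^{EQ(O)}(j''), the set of neighbors of j'' in EQ(O). -/

import Mathlib

open Classical

variable {V : Type*}

namespace GSM

/-- Symmetric adjacency induced by a set of (directed A→B) edges. -/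
def Adj (E : Finset (V × V)) (a b : V) : Prop := (a, b) ∈ E ∨ (b, a) ∈ E

/-- A path from `k` to `k'`: a nonempty list of distinct nodes starting at `k`,
ending at `k'`, with consecutive nodes adjacent. -/
def IsPath (E : Finset (V × V)) (p : List V) (k k' : V) : Prop :=
  p.head? = some k ∧ p.getLast? = some k' ∧ p.Nodup ∧ p.Chain' (Adj E)

/-- The offer induced at the end of a path, starting from offer `x` at its head:
`O_{x_0} = x` and `O_{x_{n+1}} = v_{x_{n+1}}(x_n, O_{x_n})`. -/
def pathOffer (v : V → V → ℝ → ℝ) : List V → ℝ → ℝ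
  | [], x => x
  | [_], x => x
  | a :: b :: rest, x => pathOffer v (b :: rest) (v b a x)

/-- The equality subgraph of an offer profile: edges `(i,j) ∈ E` with `O j = v j i (O i)`. -/
noncomputable def EQg (E : Finset (V × V)) (v : V → V → ℝ → ℝ) (O : V → ℝ) : Finset (V × V) :=
  E.filter fun e => O e.2 = v e.2 e.1 (O e.1)

/-- Stability of an offer profile: for every edge `(i,j) ∈ E`, `O j ≥ v j i (O i)`. -/
def Stable (E : Finset (V × V)) (v : V → V → ℝ → ℝ) (O : V → ℝ) : Prop :=
  ∀ e ∈ E, v e.2 e.1 (O e.1) ≤ O e.2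

/-- A matching: no two distinct edges share a node. -/
def IsMatching (M : Finset (V × V)) : Prop :=
  ∀ e ∈ M, ∀ e' ∈ M, e ≠ e' → e.1 ≠ e'.1 ∧ e.1 ≠ e'.2 ∧ e.2 ≠ e'.1 ∧ e.2 ≠ e'.2

/-- A node is matched if it lies on an edge of the matching. -/
def Matched (M : Finset (V × V)) (x : V) : Prop := ∃ e ∈ M, e.1 = x ∨ e.2 = x

/-- A near-perfect matching relative to the node set `X`: exactly one node of `X` is unmatched. -/
def NearPerfect (M : Finset (V × V)) (X : Finset V) : Prop :=
  ∃! x, x ∈ X ∧ ¬ Matched M x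

/-- Undirected membership of an edge in an edge set. -/
def SymMem (M : Finset (V × V)) (e : V × V) : Prop := e ∈ M ∨ e.swap ∈ M

/-- A list of nodes is alternating for the matching `M`: consecutive edges alternate
between edges of `M` and non-edges of `M`. -/
def IsAlternating (M : Finset (V × V)) (p : List V) : Prop :=
  List.Chain' (fun e e' => SymMem M e ↔ ¬ SymMem M e') (p.zip p.tail)

/-- `T` is a tree on the node set `X`: all its edges join nodes of `X` and any two
nodes of `X` are joined by a unique path in `T`. -/
def IsTreeOn (T : Finset (V × V)) (X : Finset V) : Prop :=
  (∀ e ∈ T, e.1 ∈ X ∧ e.2 ∈ X) ∧ ∀ x ∈ X, ∀ y ∈ X, ∃! p : List V, IsPath T p x y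

/-- Degree of a node: number of incident edges of `T`. -/
noncomputable def degr (T : Finset (V × V)) (x : V) : ℕ :=
  (T.filter fun e => e.1 = x ∨ e.2 = x).card

/-- An alternating tree on node set `X` for the matching `M`, rooted at `r`:
a tree containing exactly one unmatched node `r`, in which every path from `r`
is an alternating path, every node at odd distance from `r` has degree 2, and
every leaf is at even distance from `r`. -/
def IsAltTreeOn (T M : Finset (V × V)) (r : V) (X : Finset V) : Prop :=
  IsTreeOn T X ∧ r ∈ X ∧ ¬ Matched M r ∧ (∀ x ∈ X, x ≠ r → Matched M x) ∧
  (∀ x ∈ X, ∀ p : List V, IsPath T p r x → IsAlternating M p) ∧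
  (∀ x ∈ X, ∀ p : List V, IsPath T p r x →
    (Odd (p.length - 1) → degr T x = 2) ∧ (degr T x = 1 → Even (p.length - 1)))

/-- A stable alternating spanning tree generating offer profile: a stable offer profile
whose equality subgraph contains a near-perfect matching together with an associated
alternating spanning tree. -/
def SASTG (A B : Finset V) (E : Finset (V × V)) (v : V → V → ℝ → ℝ) (O : V → ℝ) : Prop :=
  Stable E v O ∧
  ∃ M T r, IsMatching M ∧ M ⊆ EQg E v O ∧ NearPerfect M (A ∪ B) ∧
    T ⊆ EQg E v O ∧ IsAltTreeOn T M r (A ∪ B)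

/-- `y` is a child of `x` in the tree `T` rooted at `r`: there is a path from `r`
to `y` in `T` whose second-to-last node is `x`. -/
def IsChild (T : Finset (V × V)) (r x y : V) : Prop :=
  ∃ p : List V, IsPath T p r y ∧ p.dropLast.getLast? = some x

/-- A node reachable by an alternating path from some unmatched node of `A`. -/
def AltReach (G M : Finset (V × V)) (A : Finset V) (x : V) : Prop :=
  ∃ i ∈ A, ¬ Matched M i ∧ ∃ p : List V, IsPath G p i x ∧ IsAlternating M p

/-!
If a path `p` from `i` to `j'` in the equality subgraph contains `j''`, the node after `j''` on `p`
is an equality neighbor of `j''`. Otherwise, unless `i'` is itself such a neighbor on `p`, cutting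
`p` at `i'` or appending `i'` to it gives a path `Q` that avoids `j''` and induces on `i'` an offer
larger than `v_{i'}(j'', O_{j''})`. Let `k` be an equality neighbor of `j''`. If `Q` avoided `k`,
continuing it through `j''` to `k` would induce on `k` more than `O_k`, since two strictly
decreasing payoffs preserve a strict inequality. Hence `k` lies on `Q`.
-/

section

variable {E G : Finset (V × V)} {v : V → V → ℝ → ℝ} {O : V → ℝ} {p : List V} {x y z : V}

section Path

theorem Adj.symm (h : Adj E x y) : Adj E y x :=
  Or.symm h

theorem IsPath.mono (hGE : G ⊆ E) (h : IsPath G p x y) : IsPath E p x y :=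
  ⟨h.1, h.2.1, h.2.2.1, h.2.2.2.imp fun _ _ => Or.imp (hGE ·) (hGE ·)⟩

theorem IsPath.concat (h : IsPath E p x y) (hyz : Adj E y z) (hz : z ∉ p) :
    IsPath E (p ++ [z]) x z := by
  obtain ⟨hhead, hlast, hnodup, hchain⟩ := h
  refine ⟨by simp [hhead], by simp, ?_, ?_⟩
  · simpa using hnodup.concat hz
  · exact hchain.append (List.isChain_singleton z) (by simp [hlast, hyz])

theorem IsPath.exists_isPath_of_mem (h : IsPath E p x y) (hz : z ∈ p) :
    ∃ q, IsPath E q x z ∧ q ⊆ p := by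
  obtain ⟨s, t, rfl⟩ := List.append_of_mem hz
  rw [List.append_cons] at h ⊢
  obtain ⟨hhead, -, hnodup, hchain⟩ := h
  refine ⟨s ++ [z], ⟨?_, by simp, hnodup.of_append_left, hchain.left_of_append⟩,
    List.subset_append_left _ _⟩
  simpa using hhead

theorem IsPath.exists_adj_of_mem (h : IsPath E p x y) (hz : z ∈ p) (hzy : z ≠ y) :
    ∃ a ∈ p, Adj E z a := by
  obtain ⟨s, t, rfl⟩ := List.append_of_mem hz
  obtain ⟨-, hlast, -, hchain⟩ := h
  cases t with
  | nil => exact absurd (by simpa using hlast) hzy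
  | cons a t => exact ⟨a, by simp, (List.isChain_cons_cons.1 hchain.right_of_append).1⟩

end Path

section Bipartite

variable {A B : Finset V}

theorem mem_of_adj_of_mem_right (hdisj : Disjoint A B) (hE : E ⊆ A ×ˢ B) (hy : y ∈ B)
    (h : Adj E x y) : (x, y) ∈ E :=
  h.resolve_right fun hyx =>
    Finset.disjoint_left.1 hdisj (Finset.mem_product.1 (hE hyx)).1 hy

theorem ne_of_mem_edges (hdisj : Disjoint A B) (hE : E ⊆ A ×ˢ B) (h : (x, y) ∈ E) : x ≠ y :=
  Finset.disjoint_iff_ne.1 hdisj x (Finset.mem_product.1 (hE h)).1 y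
    (Finset.mem_product.1 (hE h)).2

end Bipartite

section PathOffer

theorem pathOffer_concat (v : V → V → ℝ → ℝ) (y z : V) :
    ∀ (p : List V) (o : ℝ), p.getLast? = some y →
      pathOffer v (p ++ [z]) o = v z y (pathOffer v p o)
  | [], _, hlast => by simp at hlast
  | [a], o, hlast => by
      obtain rfl : a = y := by simpa using hlast
      rfl
  | a :: b :: p, o, hlast =>
      pathOffer_concat v y z (b :: p) (v b a o) (by simpa using hlast)

theorem pathOffer_eq_of_isChain {R : V → V → Prop} (hR : ∀ a b, R a b → O b = v b a (O a)) :
    ∀ {p : List V} {x y : V}, p.head? = some x → p.getLast? = some y → p.IsChain R →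
      pathOffer v p (O x) = O y
  | [], _, _, hhead, _, _ => by simp at hhead
  | [a], x, y, hhead, hlast, _ => by
      obtain rfl : a = x := by simpa using hhead
      obtain rfl : a = y := by simpa using hlast
      rfl
  | a :: b :: p, x, y, hhead, hlast, hchain => by
      obtain rfl : a = x := by simpa using hhead
      obtain ⟨hab, hchain⟩ := List.isChain_cons_cons.1 hchain
      rw [pathOffer, ← hR a b hab]
      exact pathOffer_eq_of_isChain hR rfl (by simpa using hlast) hchain

end PathOffer

section Equality

/-- The assumptions on pareto payoff functions: along each edge, the payoffs `v b a` and `v a b` of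
its two ends are strictly decreasing and inverse to each other. The inverse law replaces the formula
of `v` in terms of the utilities `u`, of which it is a consequence. -/
structure IsParetoPayoff (E : Finset (V × V)) (v : V → V → ℝ → ℝ) : Prop where
  strictAnti : ∀ e ∈ E, StrictAnti (v e.2 e.1) ∧ StrictAnti (v e.1 e.2)
  inverse : ∀ e ∈ E, (∀ o, v e.1 e.2 (v e.2 e.1 o) = o) ∧ (∀ o, v e.2 e.1 (v e.1 e.2 o) = o)

theorem IsParetoPayoff.strictAnti_of_adj (hv : IsParetoPayoff E v) (h : Adj E x y) :
    StrictAnti (v y x) :=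
  h.elim (fun h => (hv.strictAnti _ h).1) (fun h => (hv.strictAnti _ h).2)

theorem IsParetoPayoff.leftInverse_of_adj (hv : IsParetoPayoff E v) (h : Adj E x y) :
    Function.LeftInverse (v x y) (v y x) :=
  h.elim (fun h => (hv.inverse _ h).1) (fun h => (hv.inverse _ h).2)

theorem mem_EQg : (x, y) ∈ EQg E v O ↔ (x, y) ∈ E ∧ O y = v y x (O x) :=
  Finset.mem_filter

theorem EQg_subset : EQg E v O ⊆ E :=
  Finset.filter_subset _ _

theorem IsParetoPayoff.eq_of_adj_EQg (hv : IsParetoPayoff E v) (h : Adj (EQg E v O) x y) :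
    O y = v y x (O x) := by
  rcases h with h | h <;> obtain ⟨hE, heq⟩ := mem_EQg.1 h
  · exact heq
  · rw [heq, hv.leftInverse_of_adj (Or.inl hE)]

theorem IsPath.pathOffer_eq_of_EQg (hv : IsParetoPayoff E v) (h : IsPath (EQg E v O) p x y) :
    pathOffer v p (O x) = O y :=
  pathOffer_eq_of_isChain (fun _ _ => hv.eq_of_adj_EQg) h.1 h.2.1 h.2.2.2

theorem Stable.lt_of_notMem_EQg (hv : IsParetoPayoff E v) (hO : Stable E v O) (h : (x, y) ∈ E)
    (hne : (x, y) ∉ EQg E v O) : v x y (O y) < O x := by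
  have hlt : v y x (O x) < O y := (hO _ h).lt_of_ne fun heq => hne (mem_EQg.2 ⟨h, heq.symm⟩)
  simpa only [hv.leftInverse_of_adj (Or.inl h) (O x)] using hv.strictAnti_of_adj (Or.inr h) hlt

theorem IsPath.mem_of_lt_pathOffer {i' j k : V} {o : ℝ} (hv : IsParetoPayoff E v)
    (hp : IsPath E p x i') (hij : Adj E i' j) (hkj : (k, j) ∈ EQg E v O) (hne : k ≠ j)
    (hmax : ∀ P, IsPath E P x k → pathOffer v P o ≤ O k) (hj : j ∉ p)
    (hlt : v i' j (O j) < pathOffer v p o) : k ∈ p := by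
  by_contra hk
  have hjk : Adj E j k := Or.inr (EQg_subset hkj)
  have hpj : IsPath E (p ++ [j]) x j := hp.concat hij hj
  have hpjk : IsPath E (p ++ [j] ++ [k]) x k := hpj.concat hjk (by simp [hk, hne])
  refine (hmax _ hpjk).not_gt ?_
  have hoffer_j : v j i' (pathOffer v p o) < O j := by
    simpa only [hv.leftInverse_of_adj hij.symm (O j)] using hv.strictAnti_of_adj hij hlt
  calc O k = v k j (O j) := hv.eq_of_adj_EQg (Or.inr hkj)
    _ < v k j (v j i' (pathOffer v p o)) := hv.strictAnti_of_adj hjk hoffer_j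
    _ = pathOffer v (p ++ [j] ++ [k]) o := by
      rw [pathOffer_concat v j k _ _ hpj.2.1, pathOffer_concat v i' j _ _ hp.2.1]

end Equality

section Blocking

variable {A B : Finset V} {i i' j' j'' k : V}

theorem IsPath.exists_EQg_neighbor_of_mem (hdisj : Disjoint A B) (hE : E ⊆ A ×ˢ B)
    (hp : IsPath (EQg E v O) p x y) (hz : z ∈ p) (hzy : z ≠ y) (hzB : z ∈ B) :
    ∃ k ∈ p, (k, z) ∈ EQg E v O := by
  obtain ⟨k, hk, hadj⟩ := hp.exists_adj_of_mem hz hzy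
  exact ⟨k, hk, mem_of_adj_of_mem_right hdisj (EQg_subset.trans hE) hzB hadj.symm⟩

theorem IsPath.EQg_neighbor_mem_of_mem (hv : IsParetoPayoff E v) (hstable : Stable E v O)
    (hmax : ∀ P, IsPath E P i k → pathOffer v P (O i) ≤ O k)
    (hp : IsPath (EQg E v O) p i y) (hi' : i' ∈ p) (hj'' : j'' ∉ p)
    (hE : (i', j'') ∈ E) (hEQ : (i', j'') ∉ EQg E v O)
    (hk : (k, j'') ∈ EQg E v O) (hkj : k ≠ j'') : k ∈ p := by
  obtain ⟨q, hq, hqp⟩ := hp.exists_isPath_of_mem hi'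
  have hlt : v i' j'' (O j'') < pathOffer v q (O i) :=
    (hstable.lt_of_notMem_EQg hv hE hEQ).trans_eq (hq.pathOffer_eq_of_EQg hv).symm
  exact hqp <| (hq.mono EQg_subset).mem_of_lt_pathOffer hv (Or.inl hE) hk hkj hmax
    (fun h => hj'' (hqp h)) hlt

theorem IsPath.EQg_neighbor_mem_of_notMem (hv : IsParetoPayoff E v)
    (hmax : ∀ P, IsPath E P i k → pathOffer v P (O i) ≤ O k)
    (hp : IsPath (EQg E v O) p i j') (hi' : i' ∉ p) (hj'' : j'' ∉ p)
    (hi'j' : Adj E i' j') (hi'j'' : Adj E i' j'') (hne : i' ≠ j'')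
    (hgt : v i' j' (O j') > v i' j'' (O j''))
    (hk : (k, j'') ∈ EQg E v O) (hkj : k ≠ j'') : k ∈ p := by
  have hq : IsPath E (p ++ [i']) i i' := (hp.mono EQg_subset).concat hi'j'.symm hi'
  have hoffer : pathOffer v (p ++ [i']) (O i) = v i' j' (O j') := by
    rw [pathOffer_concat v j' i' _ _ hp.2.1, hp.pathOffer_eq_of_EQg hv]
  have hki' : k ≠ i' := by
    rintro rfl
    refine (hmax _ hq).not_gt ?_
    rwa [hoffer, hv.eq_of_adj_EQg (Or.inr hk)]
  have hkq : k ∈ p ++ [i'] := hq.mem_of_lt_pathOffer hv hi'j'' hk hkj hmax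
    (by simp [hj'', hne.symm]) (hgt.trans_eq hoffer.symm)
  simpa [hki'] using hkq

theorem paths_to_jp_blocked_general (hdisj : Disjoint A B) (hE : E ⊆ A ×ˢ B)
    (hv : IsParetoPayoff E v)
    (hmax : ∀ k ∈ A, ∀ P, IsPath E P i k → pathOffer v P (O i) ≤ O k) (hstable : Stable E v O)
    (hj' : (i', j') ∈ E) (hj'' : (i', j'') ∈ E) (hattained : ∃ k, (k, j'') ∈ EQg E v O)
    (hgt : v i' j' (O j') > v i' j'' (O j'')) (hp : IsPath (EQg E v O) p i j') :
    ∃ k ∈ p, (k, j'') ∈ EQg E v O := by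
  by_cases hj''p : j'' ∈ p
  · have hne : j'' ≠ j' := fun h => (h ▸ hgt).false
    exact hp.exists_EQg_neighbor_of_mem hdisj hE hj''p hne (Finset.mem_product.1 (hE hj'')).2
  obtain ⟨k, hk⟩ := hattained
  have hkj : k ≠ j'' := ne_of_mem_edges hdisj hE (EQg_subset hk)
  have hmax_k := hmax k (Finset.mem_product.1 (hE (EQg_subset hk))).1
  by_cases hi' : i' ∈ p
  · by_cases hEQ : (i', j'') ∈ EQg E v O
    · exact ⟨i', hi', hEQ⟩
    · exact ⟨k, hp.EQg_neighbor_mem_of_mem hv hstable hmax_k hi' hj''p hj'' hEQ hk hkj, hk⟩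
  · exact ⟨k, hp.EQg_neighbor_mem_of_notMem hv hmax_k hi' hj''p (Or.inl hj') (Or.inl hj'')
      (ne_of_mem_edges hdisj hE hj'') hgt hk hkj, hk⟩

end Blocking

end

/-- for the offer profile generated by maximum offer inducing paths from `i`,
if `(i',j')` and `(i',j'')` are non-equality edges with `v_{i'}(j',O_{j'}) > v_{i'}(j'',O_{j''})`,
then every path from `i` to `j'` inside the equality subgraph passes through a neighbor of
`j''` in the equality subgraph. -/
theorem paths_to_jp_blocked [DecidableEq V]
    (A B : Finset V) (E : Finset (V × V))
    (hdisj : Disjoint A B) (hA : A.Nonempty) (hB : B.Nonempty)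
    (hE : E ⊆ A ×ˢ B)
    (hconn : ∀ x ∈ A ∪ B, ∀ y ∈ A ∪ B, ∃ p : List V, IsPath E p x y)
    (v : V → V → ℝ → ℝ)
    (hvC : ∀ e ∈ E, Continuous (v e.2 e.1) ∧ Continuous (v e.1 e.2))
    (hvA : ∀ e ∈ E, StrictAnti (v e.2 e.1) ∧ StrictAnti (v e.1 e.2))
    (hvInv : ∀ e ∈ E, (∀ x, v e.1 e.2 (v e.2 e.1 x) = x) ∧ (∀ x, v e.2 e.1 (v e.1 e.2 x) = x))
    (i : V) (hi : i ∈ A) (o : ℝ) (O : V → ℝ) (hOi : O i = o)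
    (hOA : ∀ i' ∈ A, (∃ P : List V, IsPath E P i i' ∧ pathOffer v P o = O i') ∧
      ∀ P : List V, IsPath E P i i' → pathOffer v P o ≤ O i')
    (hOB : ∀ j ∈ B, (∃ i', (i', j) ∈ E ∧ O j = v j i' (O i')) ∧
      ∀ i', (i', j) ∈ E → v j i' (O i') ≤ O j)
    (i' j' j'' : V)
    (h1 : (i', j') ∈ E) (h2 : (i', j'') ∈ E)
    (h1n : (i', j') ∉ EQg E v O) (h2n : (i', j'') ∉ EQg E v O)
    (hgt : v i' j' (O j') > v i' j'' (O j'')) :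
    ∀ p : List V, IsPath (EQg E v O) p i j' → ∃ k ∈ p, (k, j'') ∈ EQg E v O := by
  subst hOi
  exact fun p => paths_to_jp_blocked_general hdisj hE ⟨hvA, hvInv⟩ (fun k hk => (hOA k hk).2)
    (fun e he => (hOB e.2 (Finset.mem_product.1 (hE he)).2).2 e.1 he) h1 h2
    (by simpa only [mem_EQg] using (hOB j'' (Finset.mem_product.1 (hE h2)).2).1) hgt

end GSM
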